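/- Let n ≥ 2 and let S = {eᵢ : 1 ≤ i ≤ n} ∪ {eᵢ + eⱼ : 1 ≤ i < j ≤ n} ∪ {e₁ + e₂ + ⋯ + eₙ} ⊂ ℝⁿ. Let F : ℝⁿ → ℝⁿ be injective and suppose that F maps each line in ℒ(S) onto a line. Then there exist an additive bijection f : ℝ → ℝ and vectors v₁, ..., vₙ ∈ ℝⁿ such that for every x = (x₁, ..., xₙ) ∈ ℝⁿ, F(x₁, ..., xₙ) − F(0) = Σᵢ f(xᵢ)vᵢ. -/

import Mathlib

/-- The line through `a` in direction `b`. -/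
def lineThru {k : ℕ} (a b : Fin k → ℝ) : Set (Fin k → ℝ) :=
  {x | ∃ t : ℝ, x = a + t • b}

/-- A subset of `ℝᵏ` is a line if it is of the form `a + ℝ b` with `b ≠ 0`. -/
def IsLine {k : ℕ} (s : Set (Fin k → ℝ)) : Prop :=
  ∃ a b : Fin k → ℝ, b ≠ 0 ∧ s = lineThru a b

/-!
On a plane spanned by two coordinate directions, `F` sends three pencils of parallel lines to lines,
and the images of two parallel lines are disjoint because `F` is injective. The diagonals force all
these images into one plane, where disjoint lines are parallel. For the two coordinate pencils this
says that mixed differences of `F` vanish, so `F - F 0` is a sum of functions of one coordinate.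
For the diagonals it says that the two coordinate functions of the plane agree and are additive.
Comparing planes that share an axis gives one additive function for all coordinates.
-/

open Function Set Submodule

section LineCurves

variable (K : Type*) {V : Type*} [Field K] [AddCommGroup V] [Module K V]

/-- A subset of a vector space is an affine line if it is spanned by two distinct points. This is
the coordinate-free form of `IsLine`, over any field. -/
def IsAffineLine (s : Set V) : Prop :=
  ∃ p q : V, p ≠ q ∧ s = line[K, p, q]

/-- A curve parametrizes a line if it runs bijectively through an affine line, in any, possibly
non-affine, manner. -/
def ParametrizesLine (γ : K → V) : Prop :=
  Injective γ ∧ IsAffineLine K (range γ)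

variable {K}

namespace ParametrizesLine

variable {γ δ : K → V} {s t : K}

lemma range_eq (hγ : ParametrizesLine K γ) (hst : s ≠ t) : range γ = line[K, γ s, γ t] := by
  obtain ⟨hinj, p, q, -, hpq⟩ := hγ
  have mem_line (r : K) : γ r ∈ line[K, p, q] := by
    rw [← SetLike.mem_coe, ← hpq]
    exact mem_range_self r
  rw [hpq, affineSpan_pair_eq_of_mem_of_mem_of_ne (mem_line s) (mem_line t) (hinj.ne hst)]

lemma sub_mem_span (hγ : ParametrizesLine K γ) (hst : s ≠ t) (r : K) :
    γ r - γ s ∈ K ∙ (γ t - γ s) := by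
  have hr : γ r ∈ line[K, γ s, γ t] := by
    rw [← SetLike.mem_coe, ← hγ.range_eq hst]
    exact mem_range_self r
  obtain ⟨c, hc⟩ := mem_affineSpan_pair_iff_exists_lineMap_eq.1 hr
  exact mem_span_singleton.2 ⟨c, by rw [← hc, AffineMap.lineMap_apply_module']; abel⟩

lemma exists_eq_add_smul (hγ : ParametrizesLine K γ) (hst : s ≠ t) (c : K) :
    ∃ r, γ r = γ s + c • (γ t - γ s) := by
  have hmem : γ s + c • (γ t - γ s) ∈ range γ := by
    rw [hγ.range_eq hst, SetLike.mem_coe, mem_affineSpan_pair_iff_exists_lineMap_eq]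
    exact ⟨c, by rw [AffineMap.lineMap_apply_module', add_comm]⟩
  exact hmem

/-- Disjoint coplanar lines are parallel. -/
lemma sub_mem_span_of_forall_ne (hγ : ParametrizesLine K γ) (hδ : ParametrizesLine K δ)
    (hne : ∀ r r', γ r ≠ δ r') {s' t' : K} (hst : s ≠ t) (hst' : s' ≠ t') {w : V}
    (hs' : δ s' - γ s ∈ span K {γ t - γ s, w}) (ht' : δ t' - δ s' ∈ span K {γ t - γ s, w})
    (r : K) : δ r - δ s' ∈ K ∙ (γ t - γ s) := by
  obtain ⟨a, b, hab⟩ := mem_span_pair.1 hs'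
  obtain ⟨c, d, hcd⟩ := mem_span_pair.1 ht'
  have hd : d = 0 := by
    by_contra hd
    obtain ⟨x, hx⟩ := hδ.exists_eq_add_smul hst' (-(b / d))
    obtain ⟨y, hy⟩ := hγ.exists_eq_add_smul hst (a - b / d * c)
    refine hne y x ?_
    have hbd : b / d * d = b := div_mul_cancel₀ b hd
    calc γ y = γ s + (a - b / d * c) • (γ t - γ s) + (b - b / d * d) • w := by
          rw [hy, hbd, sub_self, zero_smul, add_zero]
      _ = γ s + (a • (γ t - γ s) + b • w) + -(b / d) • (c • (γ t - γ s) + d • w) := by module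
      _ = δ x := by rw [hab, hcd, hx]; abel
  rw [hd, zero_smul, add_zero] at hcd
  have hdir : δ t' - δ s' ∈ K ∙ (γ t - γ s) := mem_span_singleton.2 ⟨c, hcd⟩
  exact (span_singleton_le_iff_mem _ _).2 hdir (hδ.sub_mem_span hst' r)

end ParametrizesLine

end LineCurves

section ThreeWeb

variable {K V : Type*} [Field K] [AddCommGroup V] [Module K V]

/-- An injective map of the coordinate plane `K × K` (in curried form) that sends every line of
direction `(1, 0)`, `(0, 1)` or `(1, 1)` onto a line, that is, the three pencils of the standard
planar 3-web. The diagonals carry a redundant base point to keep the notion symmetric in the two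
coordinates. -/
structure IsThreeWebMap (G : K → K → V) : Prop where
  injective2 : Injective2 G
  horizontal (y : K) : ParametrizesLine K fun x => G x y
  vertical (x : K) : ParametrizesLine K fun y => G x y
  diagonal (x y : K) : ParametrizesLine K fun t => G (x + t) (y + t)

lemma eq_of_smul_add_smul_mem_span_add {u w : V}
    (h : LinearIndependent K ![u, w]) {a b : K} (hab : a • u + b • w ∈ K ∙ (u + w)) : a = b := by
  obtain ⟨c, hc⟩ := mem_span_singleton.1 hab
  rw [smul_add] at hc
  obtain ⟨rfl, rfl⟩ := h.eq_of_pair hc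
  rfl

namespace IsThreeWebMap

variable {G : K → K → V}

lemma swap (hG : IsThreeWebMap G) : IsThreeWebMap fun x y => G y x where
  injective2 _ _ _ _ h := (hG.injective2 h).symm
  horizontal := hG.vertical
  vertical := hG.horizontal
  diagonal x y := hG.diagonal y x

lemma linearIndependent (hG : IsThreeWebMap G) :
    LinearIndependent K ![G 1 0 - G 0 0, G 0 1 - G 0 0] := by
  have hu : G 1 0 - G 0 0 ≠ 0 := sub_ne_zero.2 ((hG.horizontal 0).1.ne one_ne_zero)
  have hw : G 0 1 - G 0 0 ≠ 0 := sub_ne_zero.2 ((hG.vertical 0).1.ne one_ne_zero)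
  refine LinearIndependent.pair_iff.2 fun a b hab => ?_
  obtain ⟨x, hx⟩ := (hG.horizontal 0).exists_eq_add_smul zero_ne_one a
  obtain ⟨y, hy⟩ := (hG.vertical 0).exists_eq_add_smul zero_ne_one (-b)
  have hxy : G x 0 = G 0 y := by
    rw [hx, hy, neg_smul, eq_neg_of_add_eq_zero_left hab]
  obtain ⟨rfl, rfl⟩ := hG.injective2 hxy
  exact ⟨(smul_eq_zero.1 (left_eq_add.1 hx)).resolve_right hu,
    neg_eq_zero.1 ((smul_eq_zero.1 (left_eq_add.1 hy)).resolve_right hw)⟩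

/-- The diagonal through `G x y` meets both axes, in two points of their plane. -/
lemma sub_mem_span_pair (hG : IsThreeWebMap G) {x y : K} (hxy : x ≠ y) :
    G x y - G 0 0 ∈ span K {G 1 0 - G 0 0, G 0 1 - G 0 0} := by
  set P := span K {G 1 0 - G 0 0, G 0 1 - G 0 0}
  have hleft (s : K) : G s 0 - G 0 0 ∈ P :=
    span_mono (by simp) ((hG.horizontal 0).sub_mem_span zero_ne_one s)
  have hright (s : K) : G 0 s - G 0 0 ∈ P :=
    span_mono (by simp) ((hG.vertical 0).sub_mem_span zero_ne_one s)
  have hdiag : G x y - G (x - y) 0 ∈ K ∙ (G 0 (y - x) - G (x - y) 0) := by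
    simpa [← sub_eq_add_neg] using
      (hG.diagonal x y).sub_mem_span (neg_injective.ne hxy.symm) 0
  have hdir : G 0 (y - x) - G (x - y) 0 ∈ P := by
    simpa using P.sub_mem (hright (y - x)) (hleft (x - y))
  have hmem : G x y - G (x - y) 0 ∈ P := (span_singleton_le_iff_mem _ _).2 hdir hdiag
  simpa using P.add_mem hmem (hleft (x - y))

variable [Nontrivial Kˣ]

lemma horizontal_sub_mem_span (hG : IsThreeWebMap G) (x y : K) :
    G x y - G 0 y ∈ K ∙ (G 1 0 - G 0 0) := by
  obtain rfl | hy := eq_or_ne y 0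
  · exact (hG.horizontal 0).sub_mem_span zero_ne_one x
  -- The line at height `y` needs a point off both the diagonal and the axis: here `K ≠ 𝔽₂` enters.
  obtain ⟨c, hc⟩ := exists_ne (1 : Kˣ)
  have hcy : (c : K) * y ≠ y := by
    simpa [mul_eq_right₀ hy] using hc
  have hne : (0 : K) ≠ c * y := (mul_ne_zero c.ne_zero hy).symm
  have hleft := hG.sub_mem_span_pair hy.symm
  refine (hG.horizontal 0).sub_mem_span_of_forall_ne (hG.horizontal y)
    (fun r r' h => hy (hG.injective2 h).2.symm) zero_ne_one hne hleft ?_ x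
  simpa using sub_mem (hG.sub_mem_span_pair hcy) hleft

lemma parallelogram (hG : IsThreeWebMap G) (x y : K) : G x y - G 0 y = G x 0 - G 0 0 := by
  obtain ⟨a, ha⟩ := mem_span_singleton.1 (hG.horizontal_sub_mem_span x y)
  obtain ⟨b, hb⟩ := mem_span_singleton.1 (hG.swap.horizontal_sub_mem_span y x)
  obtain ⟨c, hc⟩ := mem_span_singleton.1 ((hG.horizontal 0).sub_mem_span zero_ne_one x)
  obtain ⟨d, hd⟩ := mem_span_singleton.1 ((hG.vertical 0).sub_mem_span zero_ne_one y)
  have hac : a = c := by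
    refine (hG.linearIndependent.eq_of_pair (t := d) (t' := b) ?_).1
    rw [ha, hb, hc, hd]
    abel
  rw [← ha, ← hc, hac]

lemma diagonal_sub_mem_span (hG : IsThreeWebMap G) (t c : K) :
    G t (c + t) - G 0 c ∈ K ∙ (G 1 1 - G 0 0) := by
  obtain rfl | hc := eq_or_ne c 0
  · simpa using (hG.diagonal 0 0).sub_mem_span zero_ne_one t
  set P := span K {G 1 1 - G 0 0, G 0 1 - G 0 0}
  have hdiag : G 1 1 - G 0 0 ∈ P := mem_span_of_mem (by simp)
  have hvert (y : K) : G 0 y - G 0 0 ∈ P :=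
    span_mono (by simp) ((hG.vertical 0).sub_mem_span zero_ne_one y)
  have hdir : G 1 (c + 1) - G 0 c ∈ P := by
    have hsum : G 1 (c + 1) - G 0 c =
        (G 1 1 - G 0 0) + (G 0 (c + 1) - G 0 0) - (G 0 1 - G 0 0) - (G 0 c - G 0 0) := by
      rw [eq_add_of_sub_eq (hG.parallelogram 1 (c + 1)), eq_add_of_sub_eq (hG.parallelogram 1 1)]
      abel
    rw [hsum]
    exact P.sub_mem (P.sub_mem (P.add_mem hdiag (hvert _)) (hvert _)) (hvert _)
  have hne (r r' : K) : G (0 + r) (0 + r) ≠ G (0 + r') (c + r') := fun h => by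
    obtain ⟨h₁, h₂⟩ := hG.injective2 h
    exact hc (by linear_combination h₁ - h₂)
  simpa using (hG.diagonal 0 0).sub_mem_span_of_forall_ne (hG.diagonal 0 c) hne
    zero_ne_one zero_ne_one (w := G 0 1 - G 0 0) (by simpa using hvert c) (by simpa using hdir) t

theorem exists_addEquiv (hG : IsThreeWebMap G) :
    ∃ f : K ≃+ K, (∀ x, G x 0 - G 0 0 = f x • (G 1 0 - G 0 0)) ∧
      ∀ y, G 0 y - G 0 0 = f y • (G 0 1 - G 0 0) := by
  have hli := hG.linearIndependent
  have hu : G 1 0 - G 0 0 ≠ 0 := hli.ne_zero 0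
  have hw : G 0 1 - G 0 0 ≠ 0 := hli.ne_zero 1
  choose f hf using fun x =>
    mem_span_singleton.1 ((hG.horizontal 0).sub_mem_span zero_ne_one x)
  choose h hh using fun y =>
    mem_span_singleton.1 ((hG.vertical 0).sub_mem_span zero_ne_one y)
  have hfh (t c : K) : f t = h (c + t) - h c := by
    refine eq_of_smul_add_smul_mem_span_add hli ?_
    have hdiag := hG.diagonal_sub_mem_span t c
    rwa [eq_add_of_sub_eq (hG.parallelogram t (c + t)), eq_add_of_sub_eq (hG.parallelogram 1 1),
      add_sub_assoc, add_sub_assoc, ← sub_sub_sub_cancel_right (G 0 (c + t)) (G 0 c) (G 0 0),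
      ← hf t, ← hh (c + t), ← hh c, ← sub_smul] at hdiag
  have hh0 : h 0 = 0 := (smul_eq_zero.1 ((hh 0).trans (sub_self _))).resolve_right hw
  have hfh' : h = f := funext fun t => by rw [hfh t 0, zero_add, hh0, sub_zero]
  rw [hfh'] at hh hfh
  have hadd (c t : K) : f (c + t) = f c + f t := by rw [hfh t c, add_sub_cancel]
  have hinj : Injective f := fun x x' hx =>
    (hG.horizontal 0).1 (sub_left_injective ((hf x).symm.trans (hx ▸ hf x')))
  have hsurj : Surjective f := fun a => by
    obtain ⟨x, hx⟩ := (hG.horizontal 0).exists_eq_add_smul zero_ne_one a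
    exact ⟨x, smul_left_injective K hu ((hf x).trans (sub_eq_of_eq_add' hx))⟩
  exact ⟨.ofBijective (AddMonoidHom.mk' f hadd) ⟨hinj, hsurj⟩,
    fun x => (hf x).symm, fun y => (hh y).symm⟩

end IsThreeWebMap

end ThreeWeb

lemma map_add_sum_sub_eq_sum {ι E V : Type*} [AddCommGroup E] [AddCommGroup V] {F : E → V}
    {y : ι → E} (hF : ∀ a i j, i ≠ j → F (a + y i + y j) - F (a + y j) = F (a + y i) - F a)
    (s : Finset ι) (a : E) :
    F (a + ∑ i ∈ s, y i) - F a = ∑ i ∈ s, (F (a + y i) - F a) := by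
  classical
  induction s using Finset.induction_on generalizing a with
  | empty => simp
  | insert j s hj ih =>
    have hshift : ∑ i ∈ s, (F (a + y j + y i) - F (a + y j)) = ∑ i ∈ s, (F (a + y i) - F a) :=
      Finset.sum_congr rfl fun i hi => by
        rw [add_right_comm, hF a i j (ne_of_mem_of_not_mem hi hj)]
    rw [Finset.sum_insert hj, Finset.sum_insert hj, ← hshift, ← ih, ← add_assoc]
    abel

section LinearDomain

variable (K : Type*) {ι E V : Type*} [Field K] [AddCommGroup E] [Module K E] [AddCommGroup V]
  [Module K V]

/-- `F` maps every line parallel to `d` onto a line. For `d = 0` this never holds. -/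
def MapsLinesOntoLines (F : E → V) (d : E) : Prop :=
  ∀ a, IsAffineLine K (F '' line[K, a, a + d])

variable {K} {F : E → V}

lemma coe_line_add (a d : E) : (line[K, a, a + d] : Set E) = range fun t : K => a + t • d := by
  ext x
  simp [mem_affineSpan_pair_iff_exists_lineMap_eq, AffineMap.lineMap_apply_module', add_comm]

lemma MapsLinesOntoLines.parametrizesLine {d : E} (hFd : MapsLinesOntoLines K F d)
    (hF : Injective F) (hd : d ≠ 0) (a : E) : ParametrizesLine K fun t : K => F (a + t • d) := by
  refine ⟨hF.comp ((add_right_injective a).comp (smul_left_injective K hd)), ?_⟩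
  have hline := hFd a
  rwa [coe_line_add, ← range_comp] at hline

lemma isThreeWebMap_of_mapsLinesOntoLines (hF : Injective F) {d e : E}
    (hde : LinearIndependent K ![d, e]) (hd : MapsLinesOntoLines K F d)
    (he : MapsLinesOntoLines K F e) (hadd : MapsLinesOntoLines K F (d + e)) (a : E) :
    IsThreeWebMap fun x y : K => F (a + x • d + y • e) where
  injective2 x x' y y' h := hde.eq_of_pair (by simpa [add_assoc] using hF h)
  horizontal y := by
    simpa only [add_right_comm] using hd.parametrizesLine hF (hde.ne_zero 0) (a + y • e)
  vertical x := he.parametrizesLine hF (hde.ne_zero 1) (a + x • d)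
  diagonal x y := by
    have hne : d + e ≠ 0 := fun h => by
      simpa using hde.eq_zero_of_pair (s := 1) (t := 1) (by simpa using h)
    convert hadd.parametrizesLine hF hne (a + x • d + y • e) using 3
    module

lemma linearIndependent_pair {b : ι → E} (hb : LinearIndependent K b) {i j : ι} (hij : i ≠ j) :
    LinearIndependent K ![b i, b j] := by
  rw [LinearIndependent.pair_iff, ← LinearIndepOn.pair_iff b hij]
  exact hb.linearIndepOn {i, j}

variable [Nontrivial Kˣ]

theorem exists_addEquiv_forall_map_smul_sub [Nontrivial ι] {b : ι → E}
    (hweb : ∀ i j, i ≠ j → IsThreeWebMap fun x y : K => F (x • b i + y • b j)) :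
    ∃ f : K ≃+ K, ∀ i (x : K), F (x • b i) - F 0 = f x • (F (b i) - F 0) := by
  have hpair (i j : ι) (hij : i ≠ j) : ∃ f : K ≃+ K,
      (∀ x : K, F (x • b i) - F 0 = f x • (F (b i) - F 0)) ∧
      ∀ x : K, F (x • b j) - F 0 = f x • (F (b j) - F 0) := by
    simpa using (hweb i j hij).exists_addEquiv
  obtain ⟨i, j, hij⟩ := exists_pair_ne ι
  obtain ⟨f, hfi, -⟩ := hpair i j hij
  refine ⟨f, fun k => ?_⟩
  obtain rfl | hik := eq_or_ne i k
  · exact hfi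
  obtain ⟨g, hgi, hgk⟩ := hpair i k hik
  have hv : F (b i) - F 0 ≠ 0 := by
    simpa using (hweb i k hik).linearIndependent.ne_zero 0
  have hfg (x : K) : f x = g x :=
    smul_left_injective K hv ((hfi x).symm.trans (hgi x))
  simpa only [hfg] using hgk

theorem diagonal_additive_form_of_S_directions_general [Nontrivial ι] (b : Module.Basis ι K E)
    (hF : Injective F) (hsingle : ∀ i, MapsLinesOntoLines K F (b i))
    (hpair : Pairwise fun i j => MapsLinesOntoLines K F (b i + b j)) :
    ∃ (f : K ≃+ K) (v : ι → V), ∀ x, F x - F 0 = (b.repr x).sum fun i c => f c • v i := by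
  have hweb (a : E) (i j : ι) (hij : i ≠ j) :
      IsThreeWebMap fun x y : K => F (a + x • b i + y • b j) :=
    isThreeWebMap_of_mapsLinesOntoLines hF (linearIndependent_pair b.linearIndependent hij)
      (hsingle i) (hsingle j) (hpair hij) a
  obtain ⟨f, hf⟩ := exists_addEquiv_forall_map_smul_sub
    fun i j hij => by simpa using hweb 0 i j hij
  refine ⟨f, fun i => F (b i) - F 0, fun x => ?_⟩
  have hmixed (a : E) (i j : ι) (hij : i ≠ j) :
      F (a + b.repr x i • b i + b.repr x j • b j) - F (a + b.repr x j • b j) =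
        F (a + b.repr x i • b i) - F a := by
    simpa using (hweb a i j hij).parallelogram (b.repr x i) (b.repr x j)
  calc F x - F 0
      = F (0 + ∑ i ∈ (b.repr x).support, b.repr x i • b i) - F 0 := by
        rw [zero_add]
        exact congrArg (F · - F 0) (b.linearCombination_repr x).symm
    _ = ∑ i ∈ (b.repr x).support, (F (b.repr x i • b i) - F 0) := by
        simpa only [zero_add] using map_add_sum_sub_eq_sum hmixed (b.repr x).support 0
    _ = (b.repr x).sum fun i c => f c • (F (b i) - F 0) :=
        Finset.sum_congr rfl fun i _ => hf i _

end LinearDomain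

lemma lineThru_eq_line {k : ℕ} (a b : Fin k → ℝ) : lineThru a b = line[ℝ, a, a + b] := by
  rw [coe_line_add]
  ext x
  simp only [lineThru, mem_ofPred_eq, mem_range, eq_comm]

lemma IsLine.isAffineLine {k : ℕ} {s : Set (Fin k → ℝ)} (hs : IsLine s) : IsAffineLine ℝ s := by
  obtain ⟨a, b, hb, rfl⟩ := hs
  exact ⟨a, a + b, (add_ne_left.2 hb).symm, lineThru_eq_line a b⟩

lemma mapsLinesOntoLines_of_isLine {k m : ℕ} {F : (Fin k → ℝ) → (Fin m → ℝ)} {d : Fin k → ℝ}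
    (hF : ∀ a, IsLine (F '' lineThru a d)) : MapsLinesOntoLines ℝ F d := fun a => by
  simpa only [lineThru_eq_line] using (hF a).isAffineLine

/-- **Theorem (a sufficient set of `n + n(n-1)/2 + 1` directions in ℝⁿ).**
Let `n ≥ 2` and `S = {eᵢ} ∪ {eᵢ + eⱼ : i < j} ∪ {e₁ + ⋯ + eₙ}`. If `F : ℝⁿ → ℝⁿ` is
injective and maps each line in `ℒ(S)` onto a line, then there are an additive
bijection `f : ℝ → ℝ` and vectors `v₁,…,vₙ ∈ ℝⁿ` with
`F x - F 0 = ∑ f (xᵢ) • vᵢ` for all `x`. -/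
theorem diagonal_additive_form_of_S_directions
    {n : ℕ} (hn : 2 ≤ n)
    (F : (Fin n → ℝ) → (Fin n → ℝ))
    (hinj : Function.Injective F)
    (honto : ∀ b : Fin n → ℝ,
      ((∃ i : Fin n, b = (Pi.single i 1 : Fin n → ℝ)) ∨
       (∃ i j : Fin n, i < j ∧
          b = (Pi.single i 1 : Fin n → ℝ) + (Pi.single j 1 : Fin n → ℝ)) ∨
       b = ∑ i : Fin n, (Pi.single i 1 : Fin n → ℝ)) →
      ∀ a : Fin n → ℝ, IsLine (F '' lineThru a b)) :
    ∃ (f : ℝ → ℝ) (v : Fin n → (Fin n → ℝ)),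
      Function.Bijective f ∧ (∀ a b : ℝ, f (a + b) = f a + f b) ∧
      ∀ x : Fin n → ℝ, F x - F 0 = ∑ i, f (x i) • v i := by
  have : Nontrivial (Fin n) := Fin.nontrivial_iff_two_le.2 hn
  have : Nontrivial ℝˣ := ⟨-1, 1, by norm_num [Units.ext_iff]⟩
  obtain ⟨f, v, hfv⟩ := diagonal_additive_form_of_S_directions_general (Pi.basisFun ℝ (Fin n)) hinj
    (fun i => mapsLinesOntoLines_of_isLine (honto _ (.inl ⟨i, Pi.basisFun_apply ℝ (Fin n) i⟩)))
    (fun i j hij => mapsLinesOntoLines_of_isLine (honto _ (.inr (.inl (by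
      simp only [Pi.basisFun_apply]
      obtain h | h := hij.lt_or_gt
      exacts [⟨i, j, h, rfl⟩, ⟨j, i, h, add_comm _ _⟩])))))
  refine ⟨f, v, f.bijective, map_add f, fun x => ?_⟩
  rw [hfv, Finsupp.sum_fintype _ _ fun i => by rw [map_zero, zero_smul]]
  simp only [Pi.basisFun_repr]
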